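/- Let (A, {Δ(λ)}) be a split quasi-hereditary algebra over a commutative Noetherian ring R and let T and Q both be characteristic tilting modules of A. Then add T = add Q, and consequently End_A(T)^op and End_A(Q)^op are Morita equivalent. -/

import Mathlib

open scoped TensorProduct
open CategoryTheory

noncomputable section

section Core

variable (R : Type) [CommRing R] (A : Type) [Ring A] [Algebra R A]

/-- The action of `a : A` on an `A`-module as an `R`-linear endomorphism. -/
def actL (M : Type) [AddCommGroup M] [Module R M] [Module A M] [IsScalarTower R A M]
    (a : A) : M →ₗ[R] M where
  toFun m := a • m
  map_add' := smul_add a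
  map_smul' r m := (smul_comm r a m).symm

/-- The right `A`-module (i.e. `Aᵐᵒᵖ`-module) structure on the `R`-linear dual of a left
`A`-module `M`, given by `(aᵒᵖ • f) m = f (a • m)`. -/
instance dualModule (M : Type) [AddCommGroup M] [Module R M] [Module A M]
    [IsScalarTower R A M] : Module Aᵐᵒᵖ (M →ₗ[R] R) where
  smul a f := f.comp (actL R A M a.unop)
  one_smul f := by ext m; show f ((1 : Aᵐᵒᵖ).unop • m) = f m; simp
  mul_smul a b f := by
    ext m
    show f ((a * b).unop • m) = f (b.unop • a.unop • m)
    simp [mul_smul]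
  smul_zero a := rfl
  smul_add a f g := rfl
  add_smul a b f := by
    ext m
    show f ((a + b).unop • m) = f (a.unop • m) + f (b.unop • m)
    simp [add_smul]
  zero_smul f := by ext m; show f ((0 : Aᵐᵒᵖ).unop • m) = 0; simp

@[simp] lemma dualModule_smul_apply (M : Type) [AddCommGroup M] [Module R M] [Module A M]
    [IsScalarTower R A M] (a : Aᵐᵒᵖ) (f : M →ₗ[R] R) (m : M) :
    (a • f) m = f (a.unop • m) := rfl

instance dualTower (M : Type) [AddCommGroup M] [Module R M] [Module A M]
    [IsScalarTower R A M] : IsScalarTower R Aᵐᵒᵖ (M →ₗ[R] R) := by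
  constructor
  intro r a f
  ext m
  show f ((r • a).unop • m) = r • f (a.unop • m)
  rw [MulOpposite.unop_smul, smul_assoc, map_smul]

/-- The left `A`-module structure on the `R`-linear dual of a right `A`-module
(i.e. an `Aᵐᵒᵖ`-module) `M`, given by `(a • f) m = f (aᵒᵖ • m)`. -/
instance dualModule' (M : Type) [AddCommGroup M] [Module R M] [Module Aᵐᵒᵖ M]
    [IsScalarTower R Aᵐᵒᵖ M] : Module A (M →ₗ[R] R) where
  smul a f := f.comp (actL R Aᵐᵒᵖ M (MulOpposite.op a))
  one_smul f := by ext m; show f (MulOpposite.op (1 : A) • m) = f m; simp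
  mul_smul a b f := by
    ext m
    show f (MulOpposite.op (a * b) • m) = f (MulOpposite.op b • MulOpposite.op a • m)
    rw [MulOpposite.op_mul, mul_smul]
  smul_zero a := rfl
  smul_add a f g := rfl
  add_smul a b f := by
    ext m
    show f (MulOpposite.op (a + b) • m) = f (MulOpposite.op a • m) + f (MulOpposite.op b • m)
    rw [MulOpposite.op_add, add_smul, map_add]
  zero_smul f := by ext m; show f (MulOpposite.op (0 : A) • m) = 0; simp

@[simp] lemma dualModule'_smul_apply (M : Type) [AddCommGroup M] [Module R M] [Module Aᵐᵒᵖ M]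
    [IsScalarTower R Aᵐᵒᵖ M] (a : A) (f : M →ₗ[R] R) (m : M) :
    (a • f) m = f (MulOpposite.op a • m) := rfl

instance dualTower' (M : Type) [AddCommGroup M] [Module R M] [Module Aᵐᵒᵖ M]
    [IsScalarTower R Aᵐᵒᵖ M] : IsScalarTower R A (M →ₗ[R] R) := by
  constructor
  intro r a f
  ext m
  show f (MulOpposite.op (r • a) • m) = r • f (MulOpposite.op a • m)
  rw [MulOpposite.op_smul, smul_assoc, map_smul]

variable (Λ : Type) [Fintype Λ] [PartialOrder Λ]

/-- Data witnessing that `X` is isomorphic to `Δ(λ) ⊗_R U` for some `λ ∈ S` and some finitely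
generated projective `R`-module `U`. -/
structure TensorFactor (Δ : Λ → Type) [∀ l, AddCommGroup (Δ l)] [∀ l, Module R (Δ l)]
    [∀ l, Module A (Δ l)] [∀ l, IsScalarTower R A (Δ l)]
    (S : Set Λ) (X : Type) [AddCommGroup X] [Module A X] : Type 1 where
  lam : Λ
  mem : lam ∈ S
  U : ModuleCat.{0} R
  fin : Module.Finite R U
  proj : Module.Projective R U
  iso : X ≃ₗ[A] (TensorProduct R (Δ lam) U)

/-- `M` belongs to `F(Δ̃_S)`: it is a finitely generated `A`-module with a finite filtration
whose factors are of the form `Δ(λ) ⊗_R U`, `λ ∈ S`, `U` a finitely generated projective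
`R`-module. -/
def InFilt (Δ : Λ → Type) [∀ l, AddCommGroup (Δ l)] [∀ l, Module R (Δ l)]
    [∀ l, Module A (Δ l)] [∀ l, IsScalarTower R A (Δ l)]
    (S : Set Λ) (M : Type) [AddCommGroup M] [Module A M] : Prop :=
  Module.Finite A M ∧
  ∃ (n : ℕ) (c : Fin (n + 1) → Submodule A M), c 0 = ⊥ ∧ c (Fin.last n) = ⊤ ∧ Monotone c ∧
    ∀ i : Fin n, Nonempty (TensorFactor R A Λ Δ S
      (↥(c i.succ) ⧸ (Submodule.comap (c i.succ).subtype (c i.castSucc))))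

/-- Data witnessing that `X` is isomorphic to `F(λ)` for some `λ ∈ S`. -/
structure PlainFactor (F : Λ → Type) [∀ l, AddCommGroup (F l)] [∀ l, Module A (F l)]
    (S : Set Λ) (X : Type) [AddCommGroup X] [Module A X] : Type 1 where
  lam : Λ
  mem : lam ∈ S
  iso : X ≃ₗ[A] F lam

/-- `M` has a finite filtration with factors among the modules `F(λ)`, `λ ∈ S`. -/
def InFiltPlain (F : Λ → Type) [∀ l, AddCommGroup (F l)] [∀ l, Module A (F l)]
    (S : Set Λ) (M : Type) [AddCommGroup M] [Module A M] : Prop :=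
  Module.Finite A M ∧
  ∃ (n : ℕ) (c : Fin (n + 1) → Submodule A M), c 0 = ⊥ ∧ c (Fin.last n) = ⊤ ∧ Monotone c ∧
    ∀ i : Fin n, Nonempty (PlainFactor A Λ F S
      (↥(c i.succ) ⧸ (Submodule.comap (c i.succ).subtype (c i.castSucc))))

/-- `X` is a direct summand of `Y` (as `A`-modules). -/
def IsDirectSummand (X Y : Type) [AddCommGroup X] [Module A X] [AddCommGroup Y]
    [Module A Y] : Prop :=
  ∃ (i : X →ₗ[A] Y) (p : Y →ₗ[A] X), p.comp i = LinearMap.id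

/-- `X` belongs to the additive closure `add T`. -/
def InAdd (T : Type) [AddCommGroup T] [Module A T] (X : Type) [AddCommGroup X]
    [Module A X] : Prop :=
  ∃ n : ℕ, IsDirectSummand A X (Fin n → T)

/-- A split quasi-hereditary structure on the `R`-algebra `A` with standard modules
`Δ(λ)`, `λ ∈ Λ` (following Rouquier's module-theoretic definition). -/
structure SplitQH (Δ : Λ → Type) [∀ l, AddCommGroup (Δ l)] [∀ l, Module R (Δ l)]
    [∀ l, Module A (Δ l)] [∀ l, IsScalarTower R A (Δ l)] : Type 1 where
  algFin : Module.Finite R A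
  algProj : Module.Projective R A
  deltaFinA : ∀ l, Module.Finite A (Δ l)
  deltaFinR : ∀ l, Module.Finite R (Δ l)
  deltaProjR : ∀ l, Module.Projective R (Δ l)
  hom_le : ∀ l m : Λ, (∃ f : Δ l →ₗ[A] Δ m, f ≠ 0) → l ≤ m
  endIso : ∀ l, Nonempty ((Module.End A (Δ l)) ≃ₐ[R] R)
  P : Λ → ModuleCat.{0} A
  P_proj : ∀ l, Module.Projective A (P l)
  P_fin : ∀ l, Module.Finite A (P l)
  epi : ∀ l, (P l : Type) →ₗ[A] Δ l
  epi_surj : ∀ l, Function.Surjective (epi l)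
  ker_filt : ∀ l, InFilt R A Λ Δ {m | l < m} ↥(LinearMap.ker (epi l))
  add_gen : ∀ (Q : ModuleCat.{0} A), Module.Finite A Q → Module.Projective A Q →
    InAdd A (∀ l, (P l : Type)) Q

/-- Vanishing of `Ext^i_A(M, N)` (computed in the abelian category of `A`-modules). -/
def extVanish (M : Type) [AddCommGroup M] [Module A M] (N : Type) [AddCommGroup N]
    [Module A N] (i : ℕ) : Prop :=
  Subsingleton (((Ext ℤ (ModuleCat.{0} A) i).obj
    (Opposite.op (ModuleCat.of A M))).obj (ModuleCat.of A N))

/-- `∇` is a family of costandard modules for the split quasi-hereditary algebra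
`(A, {Δ(λ)})`: the `R`-linear duals `D∇(λ)` make `A^op` split quasi-hereditary (with the same
poset), and the `Ext`-orthogonality relations with the standard modules hold. -/
def IsCostandard (Δ : Λ → Type) [∀ l, AddCommGroup (Δ l)] [∀ l, Module R (Δ l)]
    [∀ l, Module A (Δ l)] [∀ l, IsScalarTower R A (Δ l)]
    (N : Λ → Type) [∀ l, AddCommGroup (N l)] [∀ l, Module R (N l)]
    [∀ l, Module A (N l)] [∀ l, IsScalarTower R A (N l)] : Prop :=
  Nonempty (SplitQH R Aᵐᵒᵖ Λ (fun l => (N l →ₗ[R] R))) ∧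
  (∀ l, Nonempty ((Δ l →ₗ[A] N l) ≃ₗ[R] R)) ∧
  (∀ l m, l ≠ m → ∀ f : Δ l →ₗ[A] N m, f = 0) ∧
  (∀ l m : Λ, ∀ i : ℕ, 0 < i → extVanish A (Δ l) (N m) i)

/-- A bundled family of costandard modules. -/
structure CostandardFamily (Δ : Λ → Type) [∀ l, AddCommGroup (Δ l)] [∀ l, Module R (Δ l)]
    [∀ l, Module A (Δ l)] [∀ l, IsScalarTower R A (Δ l)] : Type 1 where
  Nab : Λ → Type
  [acg : ∀ l, AddCommGroup (Nab l)]
  [modR : ∀ l, Module R (Nab l)]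
  [modA : ∀ l, Module A (Nab l)]
  [tower : ∀ l, IsScalarTower R A (Nab l)]
  cost : IsCostandard R A Λ Δ Nab

attribute [instance] CostandardFamily.acg CostandardFamily.modR CostandardFamily.modA
  CostandardFamily.tower

/-- `T` is a family of (partial) tilting modules forming a characteristic tilting module
`⊕ T(λ)`: each `T(λ)` admits an exact sequence `0 → Δ(λ) → T(λ) → X(λ) → 0` with
`X(λ) ∈ F(Δ̃_{μ<λ})` and an exact sequence `0 → Y(λ) → T(λ) → ∇(λ) → 0` with
`Y(λ) ∈ F(∇̃_{μ<λ})`. -/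
def IsCharTilting (Δ : Λ → Type) [∀ l, AddCommGroup (Δ l)] [∀ l, Module R (Δ l)]
    [∀ l, Module A (Δ l)] [∀ l, IsScalarTower R A (Δ l)]
    (N : Λ → Type) [∀ l, AddCommGroup (N l)] [∀ l, Module R (N l)]
    [∀ l, Module A (N l)] [∀ l, IsScalarTower R A (N l)]
    (T : Λ → Type) [∀ l, AddCommGroup (T l)] [∀ l, Module A (T l)] : Prop :=
  ∀ l : Λ,
    (∃ f : Δ l →ₗ[A] T l, Function.Injective f ∧
      InFilt R A Λ Δ {m | m < l} ((T l) ⧸ LinearMap.range f)) ∧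
    (∃ g : T l →ₗ[A] N l, Function.Surjective g ∧
      InFilt R A Λ N {m | m < l} ↥(LinearMap.ker g))

end Core

end

noncomputable section

/-- Two rings are Morita equivalent if their module categories are equivalent. -/
def MoritaEquiv (B C : Type) [Ring B] [Ring C] : Prop :=
  Nonempty (ModuleCat.{0} B ≌ ModuleCat.{0} C)

/- Call a module `Ext¹`-orthogonal if `Ext¹(Δ(λ), -)` vanishes on it for all `λ`. Costandard modules
are orthogonal, hence so is every `∇`-filtered module, in particular every `T(λ)` and `Q(λ)`.
Given an orthogonal module `N`, a map `Δ(λ) → N` extends along `Δ(λ) → Q(λ)`, whose cokernel is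
`Δ`-filtered, and therefore factors through `add Q`. Factorization through `add Q` passes from the
outer terms of a short exact sequence of `Δ`-filtered modules to the middle one, because
`Ext¹(X, add Q) = 0` for every `Δ`-filtered `X`; so every map from a `Δ`-filtered module to `N`
factors through `add Q`. Applied to the identity of `N = T(λ)`, this puts `T(λ)` into `add Q`.

If `T ∈ add Q` and `Q ∈ add T`, then `M ↦ Hom_{End(T)}(Hom(T, Q), M)` is an equivalence from right
`End(T)`-modules to right `End(Q)`-modules, whose inverse exchanges the roles of `T` and `Q`. -/

section ObjectProperty

variable {C : Type*} [Category* C]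

instance (P P' : ObjectProperty C) [P.IsStableUnderRetracts] [P'.IsStableUnderRetracts] :
    (P ⊓ P').IsStableUnderRetracts where
  of_retract r h := ⟨P.prop_of_retract r h.1, P'.prop_of_retract r h.2⟩

open Limits in
lemma isClosedUnderFiniteProducts_of_isClosedUnderExtensions [Abelian C] (P : ObjectProperty C)
    [P.ContainsZero] [P.IsClosedUnderExtensions] [P.IsClosedUnderIsomorphisms] :
    P.IsClosedUnderFiniteProducts := by
  have : P.IsClosedUnderBinaryProducts :=
    { limitsOfShape_le := by
        rintro X ⟨p⟩
        refine P.prop_of_iso ?_ (P.prop_biprod (p.prop_diag_obj (.mk .left))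
          (p.prop_diag_obj (.mk .right)))
        exact IsLimit.conePointUniqueUpToIso (BinaryBiproduct.isLimit _ _)
          ((IsLimit.postcomposeHomEquiv (diagramIsoPair p.diag) _).2 p.isLimit) }
  exact .mk'

end ObjectProperty

section FactorsThrough

variable {C : Type*} [Category* C] (P : ObjectProperty C) (N : C)

/-- The objects `X` such that every morphism `X ⟶ N` factors through an object of `P`. -/
def factorsThrough : ObjectProperty C :=
  fun X ↦ ∀ f : X ⟶ N, ∃ (W : C) (_ : P W) (u : X ⟶ W) (v : W ⟶ N), u ≫ v = f

instance [P.ContainsZero] : (factorsThrough P N).ContainsZero where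
  exists_zero := by
    obtain ⟨Z, hZ, hPZ⟩ := P.exists_prop_of_containsZero
    exact ⟨Z, hZ, fun f ↦ ⟨Z, hPZ, 𝟙 Z, f, Category.id_comp f⟩⟩

instance : (factorsThrough P N).IsStableUnderRetracts where
  of_retract r hX f := by
    obtain ⟨W, hW, u, v, huv⟩ := hX (r.r ≫ f)
    exact ⟨W, hW, r.i ≫ u, v, by rw [Category.assoc, huv, r.retract_assoc]⟩

variable {P} in
lemma prop_of_factorsThrough_self [P.IsStableUnderRetracts] {X : C}
    (h : factorsThrough P X X) : P X := by
  obtain ⟨W, hW, u, v, huv⟩ := h (𝟙 X)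
  exact P.prop_of_retract ⟨u, v, huv⟩ hW

end FactorsThrough

section ExtOrthogonal

open Limits ZeroObject

variable {C : Type*} [Category* C] [Abelian C]

section

variable [HasExt C] (P : ObjectProperty C)

/-- The left orthogonal of `P` with respect to `Ext¹`: the objects `X` such that
`Ext¹(X, Y) = 0` for all `Y` in `P`. -/
def extOrthogonalLeft : ObjectProperty C :=
  fun X ↦ ∀ Y, P Y → Subsingleton (Abelian.Ext X Y 1)

/-- The right orthogonal of `P` with respect to `Ext¹`: the objects `Y` such that
`Ext¹(X, Y) = 0` for all `X` in `P`. -/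
def extOrthogonalRight : ObjectProperty C :=
  fun Y ↦ ∀ X, P X → Subsingleton (Abelian.Ext X Y 1)

lemma le_extOrthogonalLeft_extOrthogonalRight : P ≤ extOrthogonalLeft (extOrthogonalRight P) :=
  fun X hX _ hY ↦ hY X hX

variable {P} in
lemma extOrthogonalLeft_antitone {P' : ObjectProperty C} (h : P ≤ P') :
    extOrthogonalLeft P' ≤ extOrthogonalLeft P :=
  fun _ hX Y hY ↦ hX Y (h Y hY)

instance : (extOrthogonalLeft P).ContainsZero where
  exists_zero := ⟨0, isZero_zero C, fun Y _ ↦ Abelian.Ext.subsingleton_of_projective 0 Y 0⟩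

instance : (extOrthogonalRight P).ContainsZero where
  exists_zero := ⟨0, isZero_zero C, fun X _ ↦ Abelian.Ext.subsingleton_of_injective X 0 0⟩

instance : (extOrthogonalLeft P).IsClosedUnderExtensions where
  prop_X₂_of_shortExact hS h₁ h₃ Y hY := by
    have := h₁ Y hY
    have := h₃ Y hY
    refine subsingleton_of_forall_eq 0 fun x ↦ ?_
    obtain ⟨y, rfl⟩ := Abelian.Ext.contravariant_sequence_exact₂ hS Y x (Subsingleton.elim _ _)
    rw [Subsingleton.elim y 0, Abelian.Ext.comp_zero]

instance : (extOrthogonalRight P).IsClosedUnderExtensions where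
  prop_X₂_of_shortExact hS h₁ h₃ X hX := by
    have := h₁ X hX
    have := h₃ X hX
    refine subsingleton_of_forall_eq 0 fun x ↦ ?_
    obtain ⟨y, rfl⟩ := Abelian.Ext.covariant_sequence_exact₂ X hS x (Subsingleton.elim _ _)
    rw [Subsingleton.elim y 0, Abelian.Ext.zero_comp]

instance : (extOrthogonalLeft P).IsStableUnderRetracts where
  of_retract r hX Y hY := by
    have := hX Y hY
    refine subsingleton_of_forall_eq 0 fun x ↦ ?_
    rw [← Abelian.Ext.mk₀_id_comp x, ← r.retract, ← Abelian.Ext.mk₀_comp_mk₀_assoc,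
      Subsingleton.elim ((Abelian.Ext.mk₀ r.r).comp x (zero_add 1)) 0, Abelian.Ext.comp_zero]

instance : (extOrthogonalRight P).IsStableUnderRetracts where
  of_retract r hY X hX := by
    have := hY X hX
    refine subsingleton_of_forall_eq 0 fun x ↦ ?_
    rw [← Abelian.Ext.comp_mk₀_id x, ← r.retract, ← Abelian.Ext.mk₀_comp_mk₀,
      ← Abelian.Ext.comp_assoc_of_second_deg_zero,
      Subsingleton.elim (x.comp (Abelian.Ext.mk₀ r.i) (add_zero 1)) 0, Abelian.Ext.zero_comp]

lemma exists_comp_eq_of_subsingleton_ext {S : ShortComplex C} (hS : S.ShortExact) {Y : C}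
    [Subsingleton (Abelian.Ext S.X₃ Y 1)] (f : S.X₁ ⟶ Y) : ∃ g : S.X₂ ⟶ Y, S.f ≫ g = f := by
  obtain ⟨x, hx⟩ := Abelian.Ext.contravariant_sequence_exact₁ hS Y (Abelian.Ext.mk₀ f)
    (add_zero 1) (Subsingleton.elim _ _)
  obtain ⟨g, rfl⟩ := (Abelian.Ext.mk₀_bijective _ _).2 x
  exact ⟨g, (Abelian.Ext.mk₀_bijective _ _).1 (by rw [← hx, Abelian.Ext.mk₀_comp_mk₀])⟩

end

variable {P : ObjectProperty C} {N : C} [HasExt C]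

/- A morphism `f` from the middle term agrees on `X₁` with some `a ≫ v` that factors through `P`;
the difference `f - a ≫ v` then descends to `X₃` and factors through `P` as well. -/
lemma factorsThrough_X₂_of_shortExact [P.IsClosedUnderBinaryProducts] {S : ShortComplex C}
    (hS : S.ShortExact) (hX₃ : extOrthogonalLeft P S.X₃) (h₁ : factorsThrough P N S.X₁)
    (h₃ : factorsThrough P N S.X₃) : factorsThrough P N S.X₂ := by
  intro f
  obtain ⟨W, hW, u, v, huv⟩ := h₁ (S.f ≫ f)
  have := hX₃ W hW
  obtain ⟨a, ha⟩ := exists_comp_eq_of_subsingleton_ext hS u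
  have hf : S.f ≫ (f - a ≫ v) = 0 := by
    rw [Preadditive.comp_sub, reassoc_of% ha, huv, sub_self]
  have := hS.epi_g
  obtain ⟨W', hW', u', v', huv'⟩ := h₃ (hS.exact.desc _ hf)
  refine ⟨W ⊞ W', P.prop_of_isLimit_binaryFan (BinaryBiproduct.isLimit W W') hW hW',
    biprod.lift a (S.g ≫ u'), biprod.desc v v', ?_⟩
  rw [biprod.lift_desc, Category.assoc, huv', hS.exact.g_desc, add_sub_cancel]

instance [P.IsClosedUnderBinaryProducts] :
    (extOrthogonalLeft P ⊓ factorsThrough P N).IsClosedUnderExtensions where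
  prop_X₂_of_shortExact hS h₁ h₃ :=
    ⟨(extOrthogonalLeft P).prop_X₂_of_shortExact hS h₁.1 h₃.1,
      factorsThrough_X₂_of_shortExact hS h₃.1 h₁.2 h₃.2⟩

end ExtOrthogonal

section Additive

variable {A : Type} [Ring A] {T Q X Y Z : Type} [AddCommGroup T] [Module A T]
  [AddCommGroup Q] [Module A Q] [AddCommGroup X] [Module A X] [AddCommGroup Y] [Module A Y]
  [AddCommGroup Z] [Module A Z] {ι : Type}

lemma IsDirectSummand.of_equiv (e : X ≃ₗ[A] Y) : IsDirectSummand A X Y :=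
  ⟨e, e.symm, e.symm_comp⟩

lemma IsDirectSummand.trans (hXY : IsDirectSummand A X Y) (hYZ : IsDirectSummand A Y Z) :
    IsDirectSummand A X Z := by
  obtain ⟨i, p, hpi⟩ := hXY
  obtain ⟨j, q, hqj⟩ := hYZ
  exact ⟨j ∘ₗ i, p ∘ₗ q, by
    rw [LinearMap.comp_assoc, ← LinearMap.comp_assoc i, hqj, LinearMap.id_comp, hpi]⟩

lemma IsDirectSummand.pi {F G : ι → Type} [∀ i, AddCommGroup (F i)] [∀ i, Module A (F i)]
    [∀ i, AddCommGroup (G i)] [∀ i, Module A (G i)] (h : ∀ i, IsDirectSummand A (F i) (G i)) :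
    IsDirectSummand A (∀ i, F i) (∀ i, G i) := by
  choose s p hps using h
  exact ⟨.piMap s, .piMap p, LinearMap.ext fun x ↦ funext fun i ↦ LinearMap.congr_fun (hps i) (x i)⟩

lemma InAdd.of_isDirectSummand (hX : IsDirectSummand A X Y) (hY : InAdd A T Y) : InAdd A T X :=
  hY.imp fun _ ↦ hX.trans

lemma InAdd.of_isDirectSummand_pi [Finite ι] (h : IsDirectSummand A X (ι → T)) :
    InAdd A T X := by
  obtain ⟨n, ⟨e⟩⟩ := Finite.exists_equiv_fin ι
  exact ⟨n, h.trans (.of_equiv (.funCongrLeft A T e.symm))⟩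

variable (A T) in
lemma InAdd.refl : InAdd A T T :=
  .of_isDirectSummand_pi (.of_equiv (.symm (.funUnique Unit A T)))

lemma InAdd.pi [Finite ι] {F : ι → Type} [∀ i, AddCommGroup (F i)] [∀ i, Module A (F i)]
    (h : ∀ i, InAdd A T (F i)) : InAdd A T (∀ i, F i) := by
  choose n hn using h
  exact .of_isDirectSummand_pi
    ((IsDirectSummand.pi hn).trans (.of_equiv (.symm (.piCurry A fun _ _ ↦ T))))

lemma InAdd.trans (hT : InAdd A Q T) (hX : InAdd A T X) : InAdd A Q X := by
  obtain ⟨n, hn⟩ := hX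
  exact .of_isDirectSummand hn (.pi fun _ ↦ hT)

lemma InAdd.exists_sum_comp_eq_id (h : InAdd A T X) :
    ∃ (n : ℕ) (a : Fin n → X →ₗ[A] T) (b : Fin n → T →ₗ[A] X), ∑ j, b j ∘ₗ a j = .id := by
  obtain ⟨n, i, p, hpi⟩ := h
  refine ⟨n, fun j ↦ .proj j ∘ₗ i, fun j ↦ p ∘ₗ .single A (fun _ ↦ T) j, ?_⟩
  rw [← hpi]
  ext x
  simp only [LinearMap.sum_apply, LinearMap.comp_apply, LinearMap.proj_apply,
    LinearMap.coe_single, ← map_sum, Finset.univ_sum_single]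

lemma isDirectSummand_apply {F : ι → Type} [∀ i, AddCommGroup (F i)]
    [∀ i, Module A (F i)] (i : ι) : IsDirectSummand A (F i) (∀ i, F i) := by
  classical
  exact ⟨.single A F i, .proj i, LinearMap.proj_comp_single_same A F i⟩

variable (A T) in
/-- The additive closure `add T`, as a property of objects of the category of `A`-modules. -/
def addClosure : ObjectProperty (ModuleCat.{0} A) := fun X ↦ InAdd A T X

instance : (addClosure A T).IsStableUnderRetracts where
  of_retract r := .of_isDirectSummand ⟨r.i.hom, r.r.hom, congrArg ModuleCat.Hom.hom r.retract⟩

instance : (addClosure A T).IsClosedUnderFiniteProducts where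
  isClosedUnderLimitsOfShape J _ :=
    { limitsOfShape_le := by
        rintro X ⟨p⟩
        have e := Limits.IsLimit.conePointUniqueUpToIso p.isLimit
          ((Limits.IsLimit.postcomposeHomEquiv Discrete.natIsoFunctor.symm _).2
            (ModuleCat.HasLimit.productLimitCone fun j ↦ p.diag.obj ⟨j⟩).isLimit)
        exact (addClosure A T).prop_of_iso e.symm (InAdd.pi fun j ↦ p.prop_diag_obj ⟨j⟩) }

lemma InAdd.prop (P : ObjectProperty (ModuleCat.{0} A)) [P.IsStableUnderRetracts]
    [P.IsClosedUnderFiniteProducts] (hT : P (.of A T)) (hX : InAdd A T X) : P (.of A X) := by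
  obtain ⟨n, i, p, hpi⟩ := hX
  exact P.prop_of_retract ⟨ModuleCat.ofHom i, ModuleCat.ofHom p, ModuleCat.hom_ext hpi⟩
    (P.prop_of_isLimit_fan (ModuleCat.HasLimit.productLimitCone fun _ : Fin n ↦ .of A T).isLimit
      fun _ ↦ hT)

end Additive

section TensorFactor

variable {R : Type} [CommRing R] {A : Type} [Ring A] [Algebra R A] {Λ : Type}
  {F : Λ → Type} [∀ l, AddCommGroup (F l)] [∀ l, Module R (F l)] [∀ l, Module A (F l)]
  [∀ l, IsScalarTower R A (F l)] {S : Set Λ} {X : Type} [AddCommGroup X] [Module A X]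

lemma TensorFactor.inAdd (t : TensorFactor R A Λ F S X) : InAdd A (F t.lam) X := by
  have := t.fin
  have := t.proj
  obtain ⟨n, p, i, -, -, hpi⟩ := Module.Finite.exists_comp_eq_id_of_projective R t.U
  have hU : IsDirectSummand A (F t.lam ⊗[R] t.U) (F t.lam ⊗[R] (Fin n → R)) :=
    ⟨TensorProduct.AlgebraTensorModule.lTensor A (F t.lam) i,
      TensorProduct.AlgebraTensorModule.lTensor A (F t.lam) p, by
      rw [← TensorProduct.AlgebraTensorModule.lTensor_comp, hpi,
        TensorProduct.AlgebraTensorModule.lTensor_id]⟩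
  let e : F t.lam ⊗[R] (Fin n → R) ≃ₗ[A] Fin n → F t.lam :=
    TensorProduct.AlgebraTensorModule.congr (.refl A _)
        (Finsupp.linearEquivFunOnFinite R R (Fin n)).symm ≪≫ₗ
      TensorProduct.finsuppScalarRight R A (F t.lam) (Fin n) ≪≫ₗ
      Finsupp.linearEquivFunOnFinite A (F t.lam) (Fin n)
  exact ⟨n, (IsDirectSummand.of_equiv t.iso).trans (hU.trans (.of_equiv e))⟩

end TensorFactor

section Modules

lemma subsingleton_ext_of_extVanish {A : Type} [Ring A] {M N : Type} [AddCommGroup M] [Module A M]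
    [AddCommGroup N] [Module A N] {n : ℕ} (h : extVanish A M N (n + 1)) :
    Subsingleton (Abelian.Ext (ModuleCat.of A M) (ModuleCat.of A N) (n + 1)) := by
  let P := ProjectiveResolution.of (ModuleCat.of A M)
  have hP : (P.complex.linearYonedaObj ℤ (ModuleCat.of A N)).ExactAt (n + 1) := by
    have : Subsingleton (((Ext ℤ (ModuleCat.{0} A) (n + 1)).obj
      (Opposite.op (ModuleCat.of A M))).obj (ModuleCat.of A N)) := h
    rw [HomologicalComplex.exactAt_iff_isZero_homology]
    exact (ModuleCat.isZero_of_subsingleton _).of_iso (P.isoExt (n + 1) (ModuleCat.of A N)).symm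
  rw [HomologicalComplex.exactAt_iff' _ n (n + 1) (n + 2) (by simp) (by simp),
    ShortComplex.moduleCat_exact_iff] at hP
  refine subsingleton_of_forall_eq 0 fun x ↦ ?_
  obtain ⟨f, hf, rfl⟩ := P.extMk_surjective x (n + 2) rfl
  exact (P.extMk_eq_zero_iff f (n + 2) rfl hf n rfl).2 (hP f hf)

universe v in
lemma shortExact_mkQ {A : Type*} [Ring A] {L M : Type v} [AddCommGroup L] [Module A L]
    [AddCommGroup M] [Module A M] {f : L →ₗ[A] M} (hf : Function.Injective f)
    {p : Submodule A M} (hp : LinearMap.range f = p) :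
    (ModuleCat.shortComplexOfCompEqZero f p.mkQ
      (hp ▸ LinearMap.range_mkQ_comp f)).ShortExact :=
  ModuleCat.shortComplex_shortExact _
    (LinearMap.exact_iff.2 (p.ker_mkQ.trans hp.symm)) hf p.mkQ_surjective

end Modules

section Filtration

variable {A : Type} [Ring A] {Λ : Type} {F : Λ → Type} [∀ l, AddCommGroup (F l)]
  [∀ l, Module A (F l)]

variable (A F) in
/-- The family of modules `F`, as a property of objects of the category of `A`-modules. -/
abbrev familyProperty : ObjectProperty (ModuleCat.{0} A) :=
  .ofObj fun l ↦ .of A (F l)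

lemma familyProperty_apply (l : Λ) : familyProperty A F (.of A (F l)) :=
  ObjectProperty.ofObj_apply _ l

variable {R : Type} [CommRing R] [Algebra R A] [∀ l, Module R (F l)]
  [∀ l, IsScalarTower R A (F l)] {S : Set Λ} {M : Type} [AddCommGroup M] [Module A M]

lemma InFilt.prop (P : ObjectProperty (ModuleCat.{0} A)) [P.ContainsZero]
    [P.IsClosedUnderExtensions] [P.IsStableUnderRetracts] (hF : ∀ l ∈ S, P (.of A (F l)))
    (hM : InFilt R A Λ F S M) : P (.of A M) := by
  obtain ⟨-, n, c, hbot, htop, hmono, hfac⟩ := hM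
  have := isClosedUnderFiniteProducts_of_isClosedUnderExtensions P
  have hc (i : Fin (n + 1)) : P (.of A (c i)) := by
    induction i using Fin.induction with
    | zero => exact P.prop_of_isZero (hbot ▸ ModuleCat.isZero_of_subsingleton _)
    | succ i ih =>
      obtain ⟨t⟩ := hfac i
      exact P.prop_X₂_of_shortExact
        (shortExact_mkQ (Submodule.inclusion_injective (hmono i.castSucc_le_succ))
          (Submodule.range_inclusion _ _ _)) ih (t.inAdd.prop P (hF t.lam t.mem))
  have hlast := hc (Fin.last n)
  rw [htop] at hlast
  exact P.prop_of_iso Submodule.topEquiv.toModuleIso hlast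

lemma InFilt.prop_extOrthogonalLeft (hM : InFilt R A Λ F S M) :
    extOrthogonalLeft (extOrthogonalRight (familyProperty A F)) (.of A M) :=
  hM.prop _ fun l _ ↦ le_extOrthogonalLeft_extOrthogonalRight _ _ (familyProperty_apply l)

end Filtration

section Tilting

variable {R : Type} [CommRing R] {A : Type} [Ring A] [Algebra R A] {Λ : Type} [PartialOrder Λ]
  {Δ Nb T Q : Λ → Type}
  [∀ l, AddCommGroup (Δ l)] [∀ l, Module R (Δ l)] [∀ l, Module A (Δ l)]
  [∀ l, IsScalarTower R A (Δ l)]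
  [∀ l, AddCommGroup (Nb l)] [∀ l, Module R (Nb l)] [∀ l, Module A (Nb l)]
  [∀ l, IsScalarTower R A (Nb l)]
  [∀ l, AddCommGroup (T l)] [∀ l, Module A (T l)]
  [∀ l, AddCommGroup (Q l)] [∀ l, Module A (Q l)]

lemma IsCharTilting.prop_extOrthogonalRight (hT : IsCharTilting R A Λ Δ Nb T)
    (hNb : ∀ l, extOrthogonalRight (familyProperty A Δ) (.of A (Nb l))) (l : Λ) :
    extOrthogonalRight (familyProperty A Δ) (.of A (T l)) := by
  obtain ⟨-, g, hg, hker⟩ := hT l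
  exact ObjectProperty.prop_X₂_of_shortExact _ (g.shortExact_shortComplexKer hg)
    (hker.prop _ fun m _ ↦ hNb m) (hNb l)

lemma IsCharTilting.addClosure_le_extOrthogonalRight [Finite Λ] (hQ : IsCharTilting R A Λ Δ Nb Q)
    (hNb : ∀ l, extOrthogonalRight (familyProperty A Δ) (.of A (Nb l))) :
    addClosure A (∀ l, Q l) ≤ extOrthogonalRight (familyProperty A Δ) := by
  have := isClosedUnderFiniteProducts_of_isClosedUnderExtensions
    (extOrthogonalRight (familyProperty A Δ))
  exact fun X hX ↦ InAdd.prop _ (ObjectProperty.prop_of_isLimit_fan _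
    (ModuleCat.HasLimit.productLimitCone fun l ↦ .of A (Q l)).isLimit
    fun l ↦ hQ.prop_extOrthogonalRight hNb l) hX

lemma IsCharTilting.factorsThrough_standard (hQ : IsCharTilting R A Λ Δ Nb Q)
    {N : ModuleCat.{0} A} (hN : extOrthogonalRight (familyProperty A Δ) N) (l : Λ) :
    factorsThrough (addClosure A (∀ l, Q l)) N (.of A (Δ l)) := by
  obtain ⟨⟨i, hi, hcoker⟩, -⟩ := hQ l
  intro φ
  have := hcoker.prop_extOrthogonalLeft N hN
  obtain ⟨ψ, hψ⟩ := exists_comp_eq_of_subsingleton_ext (shortExact_mkQ hi rfl) φ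
  exact ⟨.of A (Q l), InAdd.of_isDirectSummand (isDirectSummand_apply l) (.refl A _),
    ModuleCat.ofHom i, ψ, hψ⟩

lemma IsCharTilting.inAdd_pi [Finite Λ] (hT : IsCharTilting R A Λ Δ Nb T)
    (hQ : IsCharTilting R A Λ Δ Nb Q)
    (hNb : ∀ l, extOrthogonalRight (familyProperty A Δ) (.of A (Nb l))) :
    InAdd A (∀ l, Q l) (∀ l, T l) := by
  refine InAdd.pi fun l ↦ ?_
  let addQ := addClosure A (∀ l, Q l)
  have hΔ (m : Λ) :
      (extOrthogonalLeft addQ ⊓ factorsThrough addQ (.of A (T l))) (.of A (Δ m)) :=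
    ⟨extOrthogonalLeft_antitone (hQ.addClosure_le_extOrthogonalRight hNb) _
        (le_extOrthogonalLeft_extOrthogonalRight _ _ (familyProperty_apply m)),
      hQ.factorsThrough_standard (hT.prop_extOrthogonalRight hNb l) m⟩
  obtain ⟨⟨i, hi, hcoker⟩, -⟩ := hT l
  have hTl : (extOrthogonalLeft addQ ⊓ factorsThrough addQ (.of A (T l))) (.of A (T l)) :=
    ObjectProperty.prop_X₂_of_shortExact _ (shortExact_mkQ hi rfl) (hΔ l)
      (hcoker.prop _ fun m _ ↦ hΔ m)
  exact prop_of_factorsThrough_self (P := addQ) hTl.2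

end Tilting

section Morita

universe u v

open MulOpposite (op)

/-- The right action of `S` on `X →ₗ[R] Y` by precomposition, when `S` acts `R`-linearly on `X`.
A right `S`-module is encoded as an `Sᵐᵒᵖ`-module, while Mathlib has this action for `Sᵈᵐᵃ`. -/
abbrev precompModule {R S X Y : Type*} [Semiring R] [Semiring S] [AddCommMonoid X] [Module R X]
    [Module S X] [SMulCommClass R S X] [AddCommMonoid Y] [Module R Y] :
    Module Sᵐᵒᵖ (X →ₗ[R] Y) :=
  inferInstanceAs (Module Sᵈᵐᵃ (X →ₗ[R] Y))

attribute [local instance] precompModule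

variable (A : Type u) [Ring A] (T Q : Type v) [AddCommGroup T] [Module A T] [AddCommGroup Q]
  [Module A Q]

instance : SMulCommClass (Module.End A T)ᵐᵒᵖ (Module.End A Q) (T →ₗ[A] Q) :=
  ⟨fun _ _ _ ↦ rfl⟩

/-- The coinduction functor `M ↦ Hom_{End_A(T)}(Hom_A(T, Q), M)` from right `End_A(T)`-modules to
right `End_A(Q)`-modules. -/
def coinduction :
    ModuleCat.{v} (Module.End A T)ᵐᵒᵖ ⥤ ModuleCat.{v} (Module.End A Q)ᵐᵒᵖ where
  obj M := .of _ ((T →ₗ[A] Q) →ₗ[(Module.End A T)ᵐᵒᵖ] M)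
  map φ := ModuleCat.ofHom
    { toFun := φ.hom.comp
      map_add' Φ Ψ := LinearMap.comp_add Φ Ψ φ.hom
      map_smul' _ _ := rfl }

variable (M : Type v) [AddCommGroup M] [Module (Module.End A T)ᵐᵒᵖ M]

/-- The comparison map `m ↦ (b ↦ (a ↦ m · (b ∘ a)))` from a right `End_A(T)`-module to the module
obtained by coinducing it to `End_A(Q)` and back. -/
def coinductionUnit : M →ₗ[(Module.End A T)ᵐᵒᵖ] (Q →ₗ[A] T) →ₗ[(Module.End A Q)ᵐᵒᵖ]
    (T →ₗ[A] Q) →ₗ[(Module.End A T)ᵐᵒᵖ] M where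
  toFun m :=
    { toFun b :=
        { toFun a := op (b ∘ₗ a : Module.End A T) • m
          map_add' a a' := by rw [LinearMap.comp_add, MulOpposite.op_add, add_smul]
          map_smul' e a := mul_smul e (op (b ∘ₗ a : Module.End A T)) m }
      map_add' b b' := LinearMap.ext fun a ↦ by
        change op ((b + b') ∘ₗ a : Module.End A T) • m = _
        rw [LinearMap.add_comp, MulOpposite.op_add, add_smul]
        rfl
      map_smul' _ _ := rfl }
  map_add' m m' := by
    ext b a
    exact smul_add _ m m'
  map_smul' e m := by
    ext b a
    exact (mul_smul (op (b ∘ₗ a : Module.End A T)) e m).symm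

variable {A T Q}

lemma sum_coinductionUnit {ι : Type*} [Fintype ι] {a : ι → T →ₗ[A] Q} {b : ι → Q →ₗ[A] T}
    (hab : ∑ j, b j ∘ₗ a j = .id) (m : M) : ∑ j, coinductionUnit A T Q M m (b j) (a j) = m := by
  change ∑ j, op (b j ∘ₗ a j : Module.End A T) • m = m
  rw [← Finset.sum_smul, ← Finset.op_sum, hab]
  exact one_smul _ m

variable {M} in
lemma coinductionUnit_sum {ι : Type*} [Fintype ι] {a : ι → T →ₗ[A] Q} {b : ι → Q →ₗ[A] T}
    (hab : ∑ j, b j ∘ₗ a j = .id)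
    (Φ : (Q →ₗ[A] T) →ₗ[(Module.End A Q)ᵐᵒᵖ] (T →ₗ[A] Q) →ₗ[(Module.End A T)ᵐᵒᵖ] M) :
    coinductionUnit A T Q M (∑ j, Φ (b j) (a j)) = Φ := by
  ext y x
  have hy : ∑ j, op (a j ∘ₗ y : Module.End A Q) • b j = y := by
    change ∑ j, (b j ∘ₗ a j) ∘ₗ y = y
    ext q
    simpa only [LinearMap.sum_apply, LinearMap.comp_apply, LinearMap.id_apply] using
      LinearMap.congr_fun hab (y q)
  calc op (y ∘ₗ x : Module.End A T) • ∑ j, Φ (b j) (a j)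
      = ∑ j, Φ (b j) (op (y ∘ₗ x : Module.End A T) • a j) := by
        simp only [Finset.smul_sum, map_smul]
    _ = ∑ j, Φ (op (a j ∘ₗ y : Module.End A Q) • b j) x :=
        Finset.sum_congr rfl fun j _ ↦ (LinearMap.congr_fun
          (map_smul Φ (op (a j ∘ₗ y : Module.End A Q)) (b j)) x).symm
    _ = Φ y x := by rw [← LinearMap.sum_apply, ← map_sum, hy]

lemma coinductionUnit_bijective {ι : Type*} [Fintype ι] {a : ι → T →ₗ[A] Q} {b : ι → Q →ₗ[A] T}
    (hab : ∑ j, b j ∘ₗ a j = .id) : Function.Bijective (coinductionUnit A T Q M) :=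
  Function.bijective_iff_has_inverse.2 ⟨fun Φ ↦ ∑ j, Φ (b j) (a j), sum_coinductionUnit M hab,
    coinductionUnit_sum hab⟩

/-- The unit `𝟭 ≅ coind ∘ coind` available when the identity of `T` factors through a finite power
of `Q`. -/
def coinductionUnitIso {ι : Type*} [Fintype ι] {a : ι → T →ₗ[A] Q} {b : ι → Q →ₗ[A] T}
    (hab : ∑ j, b j ∘ₗ a j = .id) :
    𝟭 (ModuleCat.{v} (Module.End A T)ᵐᵒᵖ) ≅ coinduction A T Q ⋙ coinduction A Q T :=
  NatIso.ofComponents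
    (fun M ↦ (LinearEquiv.ofBijective _ (coinductionUnit_bijective M hab)).toModuleIso)
    (fun φ ↦ by
      ext m
      exact LinearMap.ext fun b ↦ LinearMap.ext fun a ↦ (map_smul φ.hom _ m).symm)

lemma moritaEquiv_end_of_inAdd {A T Q : Type} [Ring A] [AddCommGroup T] [Module A T]
    [AddCommGroup Q] [Module A Q] (hT : InAdd A Q T) (hQ : InAdd A T Q) :
    MoritaEquiv (Module.End A T)ᵐᵒᵖ (Module.End A Q)ᵐᵒᵖ := by
  obtain ⟨_, _, _, hT⟩ := hT.exists_sum_comp_eq_id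
  obtain ⟨_, _, _, hQ⟩ := hQ.exists_sum_comp_eq_id
  exact ⟨.mk (coinduction A T Q) (coinduction A Q T) (coinductionUnitIso hT)
    (coinductionUnitIso hQ).symm⟩

end Morita

theorem characteristic_tilting_add_unique_general
    (R : Type) [CommRing R] (A : Type) [Ring A] [Algebra R A]
    (Λ : Type) [Finite Λ] [PartialOrder Λ]
    (Δ : Λ → Type) [∀ l, AddCommGroup (Δ l)] [∀ l, Module R (Δ l)]
    [∀ l, Module A (Δ l)] [∀ l, IsScalarTower R A (Δ l)]
    (Nb : Λ → Type) [∀ l, AddCommGroup (Nb l)] [∀ l, Module R (Nb l)]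
    [∀ l, Module A (Nb l)] [∀ l, IsScalarTower R A (Nb l)]
    (hext : ∀ l m, extVanish A (Δ l) (Nb m) 1)
    (T : Λ → Type) [∀ l, AddCommGroup (T l)] [∀ l, Module A (T l)]
    (hT : IsCharTilting R A Λ Δ Nb T)
    (Q : Λ → Type) [∀ l, AddCommGroup (Q l)] [∀ l, Module A (Q l)]
    (hQ : IsCharTilting R A Λ Δ Nb Q) :
    (∀ (X : Type) [AddCommGroup X] [Module A X],
      InAdd A (∀ l, T l) X ↔ InAdd A (∀ l, Q l) X) ∧
    MoritaEquiv (Module.End A (∀ l, T l))ᵐᵒᵖ (Module.End A (∀ l, Q l))ᵐᵒᵖ := by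
  have hNb (m : Λ) : extOrthogonalRight (familyProperty A Δ) (.of A (Nb m)) := by
    rintro _ ⟨l⟩
    exact subsingleton_ext_of_extVanish (hext l m)
  have hTQ : InAdd A (∀ l, Q l) (∀ l, T l) := hT.inAdd_pi hQ hNb
  have hQT : InAdd A (∀ l, T l) (∀ l, Q l) := hQ.inAdd_pi hT hNb
  exact ⟨fun X _ _ ↦ ⟨hTQ.trans, hQT.trans⟩, moritaEquiv_end_of_inAdd hTQ hQT⟩

/-- If `T` and `Q` are both characteristic tilting modules of the split
quasi-hereditary algebra `(A, {Δ(λ)})`, then `add T = add Q`, and `End_A(T)^op` and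
`End_A(Q)^op` are Morita equivalent. -/
theorem characteristic_tilting_add_unique
    (R : Type) [CommRing R] [IsNoetherianRing R]
    (A : Type) [Ring A] [Algebra R A]
    (Λ : Type) [Fintype Λ] [PartialOrder Λ]
    (Δ : Λ → Type) [∀ l, AddCommGroup (Δ l)] [∀ l, Module R (Δ l)]
    [∀ l, Module A (Δ l)] [∀ l, IsScalarTower R A (Δ l)]
    (Nb : Λ → Type) [∀ l, AddCommGroup (Nb l)] [∀ l, Module R (Nb l)]
    [∀ l, Module A (Nb l)] [∀ l, IsScalarTower R A (Nb l)]
    (h : SplitQH R A Λ Δ) (hc : IsCostandard R A Λ Δ Nb)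
    (T : Λ → Type) [∀ l, AddCommGroup (T l)] [∀ l, Module A (T l)]
    (hT : IsCharTilting R A Λ Δ Nb T)
    (Q : Λ → Type) [∀ l, AddCommGroup (Q l)] [∀ l, Module A (Q l)]
    (hQ : IsCharTilting R A Λ Δ Nb Q) :
    (∀ (X : Type) [AddCommGroup X] [Module A X],
      InAdd A (∀ l, T l) X ↔ InAdd A (∀ l, Q l) X) ∧
    MoritaEquiv (Module.End A (∀ l, T l))ᵐᵒᵖ (Module.End A (∀ l, Q l))ᵐᵒᵖ := by
  exact characteristic_tilting_add_unique_general R A Λ Δ Nb (fun l m ↦ hc.2.2.2 l m 1 one_pos)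
    T hT Q hQ

end
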